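/- arXiv:math/0303215 — 2 statements merged into one kernel-verified Lean document; each statement's English description precedes it below -/
import Mathlib

section
/- Let r ≥ 1 be an integer, let G = ℤ^r be the free abelian group of rank r (for instance Multiplicative (Fin r → ℤ)), and let ρ : G → ℂˣ be a nontrivial character, with ℂ_ρ the associated one-dimensional representation of G over ℂ in which g acts as scalar multiplication by ρ(g). Then the group homology H_p(G, ℂ_ρ) vanishes for every p ≥ 0. -/
open CategoryTheory

/-- The one-dimensional representation of `G` over `ℂ` attached to a character
`ρ : G →* ℂˣ`, in which `g` acts as scalar multiplication by `ρ g`. -/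
noncomputable def charRep {G : Type} [Group G] (ρ : G →* ℂˣ) : Representation ℂ G ℂ :=
  ((algebraMap ℂ (Module.End ℂ ℂ)).toMonoidHom).comp ((Units.coeHom ℂ).comp ρ)

/-- Group homology `H_p(G, V)` of a commutative group `G` with coefficients in a
representation `V` of `G` over `ℂ`, defined as `Tor_p^{ℂ[G]}(ℂ_triv, V)`. -/
noncomputable def groupHomologyTor {G : Type} [CommGroup G] {V : Type}
    [AddCommGroup V] [Module ℂ V] (ρ : Representation ℂ G V) (p : ℕ) :
    ModuleCat (MonoidAlgebra ℂ G) :=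
  ((Tor (ModuleCat (MonoidAlgebra ℂ G)) p).obj
      (ModuleCat.of (MonoidAlgebra ℂ G)
        (Representation.trivial ℂ (G := G) (V := ℂ)).asModule)).obj
    (ModuleCat.of (MonoidAlgebra ℂ G) ρ.asModule)

/-!
Let `g` satisfy `ρ g ≠ 1`. The element `g - 1` of the commutative ring `ℂ[G]` acts on
`Tor_p(ℂ, ℂ_ρ)` in the same way through either argument: it acts as `0` through the trivial
module `ℂ`, and as the automorphism `ρ g - 1` through `ℂ_ρ`. A module on which `0` is invertible
vanishes.
-/

section LeftDerived

variable {C D : Type*} [Category* C] [Category* D] [Abelian C] [Abelian D]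
  [HasProjectiveResolutions C]

theorem leftDerived_zero_app (F G : C ⥤ D) [F.Additive] [G.Additive] (n : ℕ) (X : C) :
    (NatTrans.leftDerived (0 : F ⟶ G) n).app X = 0 := by
  let P := projectiveResolution X
  have hcomplex : (NatTrans.mapHomologicalComplex (0 : F ⟶ G) (ComplexShape.down ℕ)).app
      P.complex = 0 := rfl
  rw [P.leftDerived_app_eq, hcomplex, Functor.map_zero, Limits.zero_comp, Limits.comp_zero]

theorem leftDerived_app_eq_map_smul_id {R : Type*} [Semiring R] [Linear R C] {F : C ⥤ D}
    [F.Additive] (α : F ⟶ F) (a : R) (hα : ∀ Z, α.app Z = F.map (a • 𝟙 Z)) (n : ℕ) (X : C) :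
    (NatTrans.leftDerived α n).app X = (F.leftDerived n).map (a • 𝟙 X) := by
  let P := projectiveResolution X
  have hlift : (a • 𝟙 P.complex) ≫ P.π = P.π ≫ (ChainComplex.single₀ C).map (a • 𝟙 X) := by
    ext
    have hcomp : P.π.f 0 ≫ (a • 𝟙 X) = a • P.π.f 0 :=
      (Linear.comp_smul _ _ _ _ _ _).trans (congrArg (a • ·) (Category.comp_id _))
    simpa using hcomp.symm
  have hcomplex : (NatTrans.mapHomologicalComplex α (ComplexShape.down ℕ)).app P.complex =
      (F.mapHomologicalComplex _).map (a • 𝟙 P.complex) := by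
    ext i
    exact hα (P.complex.X i)
  rw [P.leftDerived_app_eq, F.leftDerived_map_eq n _ _ hlift, hcomplex, Functor.comp_map]

end LeftDerived

section Tor

variable {R : Type*} [Semiring R] {C : Type*} [Category* C] [MonoidalCategory C] [Abelian C]
  [MonoidalPreadditive C] [Linear R C] [MonoidalLinear R C] [HasProjectiveResolutions C]

theorem tor_map_smul_id_app (a : R) (n : ℕ) (X Y : C) :
    ((Tor C n).map (a • 𝟙 X)).app Y = ((Tor C n).obj X).map (a • 𝟙 Y) :=
  leftDerived_app_eq_map_smul_id _ a (fun Z => by simp) n Y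

theorem isZero_tor_of_smul_id_eq_zero {X Y : C} (a : R) (hX : a • 𝟙 X = 0)
    [IsIso (a • 𝟙 Y)] (n : ℕ) :
    Limits.IsZero (((Tor C n).obj X).obj Y) := by
  have hzero : ((Tor C n).obj X).map (a • 𝟙 Y) = 0 := by
    have h := tor_map_smul_id_app a n X Y
    rw [hX, Tor_map, Functor.map_zero, leftDerived_zero_app] at h
    exact h.symm
  exact Limits.IsZero.of_epi_eq_zero _ hzero

end Tor

universe u in
theorem isZero_tor_of_smul_eq_zero_of_bijective_smul {R M N : Type u} [CommRing R]
    [AddCommGroup M] [Module R M] [AddCommGroup N] [Module R N] (a : R)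
    (hM : ∀ x : M, a • x = 0) (hN : Function.Bijective fun y : N => a • y) (n : ℕ) :
    Limits.IsZero
      (((Tor (ModuleCat.{u} R) n).obj (ModuleCat.of R M)).obj (ModuleCat.of R N)) := by
  have hzero : a • 𝟙 (ModuleCat.of R M) = 0 := by
    ext x
    exact hM x
  have hiso : IsIso (a • 𝟙 (ModuleCat.of R N)) :=
    (ConcreteCategory.isIso_iff_bijective _).2 hN
  exact isZero_tor_of_smul_id_eq_zero a hzero n

theorem of_sub_one_smul_asModule {k G V : Type*} [CommRing k] [Monoid G] [AddCommGroup V]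
    [Module k V] (σ : Representation k G V) (g : G) (v : σ.asModule) :
    (MonoidAlgebra.of k G g - 1) • v =
      σ.asModuleEquiv.symm ((σ g - 1) (σ.asModuleEquiv v)) := by
  rw [LinearEquiv.eq_symm_apply, Representation.asModuleEquiv_map_smul, map_sub, map_one,
    Representation.asAlgebraHom_of]

theorem isUnit_charRep_sub_one {G : Type} [Group G] {ρ : G →* ℂˣ} {g : G} (hg : ρ g ≠ 1) :
    IsUnit (charRep ρ g - 1) := by
  have hunit : IsUnit ((ρ g : ℂ) - 1) :=
    (sub_ne_zero.2 (Units.val_eq_one.not.2 hg)).isUnit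
  have hmap : charRep ρ g - 1 = algebraMap ℂ (Module.End ℂ ℂ) ((ρ g : ℂ) - 1) := by
    rw [map_sub, map_one]
    rfl
  exact hmap ▸ hunit.map (algebraMap ℂ (Module.End ℂ ℂ))

theorem isZero_groupHomologyTor_of_isUnit_sub_one {G V : Type} [CommGroup G] [AddCommGroup V]
    [Module ℂ V] (σ : Representation ℂ G V) (g : G) (hg : IsUnit (σ g - 1)) (p : ℕ) :
    Limits.IsZero (groupHomologyTor σ p) := by
  have htriv (x : (Representation.trivial ℂ (G := G) (V := ℂ)).asModule) :
      (MonoidAlgebra.of ℂ G g - 1) • x = 0 := by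
    have hone : Representation.trivial ℂ G ℂ g = 1 := rfl
    rw [of_sub_one_smul_asModule, hone, sub_self, LinearMap.zero_apply, map_zero]
  have hbij : Function.Bijective fun y : σ.asModule => (MonoidAlgebra.of ℂ G g - 1) • y := by
    simp only [of_sub_one_smul_asModule]
    exact σ.asModuleEquiv.symm.bijective.comp
      (((Module.End.isUnit_iff _).1 hg).comp σ.asModuleEquiv.bijective)
  exact isZero_tor_of_smul_eq_zero_of_bijective_smul _ htriv hbij p

theorem stmt4_general {G : Type} [CommGroup G] (ρ : G →* ℂˣ) (hρ : ρ ≠ 1) (p : ℕ) :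
    Limits.IsZero (groupHomologyTor (charRep ρ) p) := by
  obtain ⟨g, hg⟩ := DFunLike.ne_iff.1 hρ
  exact isZero_groupHomologyTor_of_isUnit_sub_one _ g (isUnit_charRep_sub_one hg) p

theorem stmt4 (r : ℕ) (hr : 1 ≤ r) (ρ : Multiplicative (Fin r → ℤ) →* ℂˣ)
    (hρ : ρ ≠ 1) (p : ℕ) :
    Limits.IsZero (groupHomologyTor (charRep ρ) p) := by
  exact stmt4_general ρ hρ p
end

section
/- Let r ≥ 1 be an integer, let G = ℤ^r be the free abelian group of rank r (for instance Multiplicative (Fin r → ℤ)), and let ρ : G → ℂˣ be a nontrivial character, with ℂ_ρ the associated one-dimensional representation of G over ℂ in which g acts as scalar multiplication by ρ(g). Then the group cohomology H^p(G, ℂ_ρ) vanishes for every p ≥ 0. -/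
open CategoryTheory

/-!
A central element `g` of `G` acts on every representation by a morphism, naturally, so it defines an
element of the center of the category of representations. Such an element `z` acts on `Ext(X, A)`
in the same way through `X` as through `A`. Applied to `z = g - 1` and the trivial representation
`X`, on which `z` is zero, this shows that `g - 1` annihilates `H^p(G, A) = Ext^p(X, A)`; if `g - 1`
is also invertible on `A`, the cohomology must vanish.
-/

section CatCenter

open Limits Opposite

variable {C D : Type*} [Category* C] [Abelian C] [Category* D] [Abelian D]

theorem leftDerived_map_zero [HasProjectiveResolutions C] (F : C ⥤ D) [F.Additive] (n : ℕ)
    (X Y : C) : (F.leftDerived n).map (0 : X ⟶ Y) = 0 := by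
  rw [F.leftDerived_map_eq n 0 (P := projectiveResolution X) (Q := projectiveResolution Y) 0
    (by simp), Functor.map_zero]
  exact (congrArg _ zero_comp).trans comp_zero

theorem leftDerived_map_catCenter_app [HasProjectiveResolutions C] (F : C ⥤ D) [F.Additive]
    {α : F ⟶ F} {z : CatCenter C} (hα : ∀ X, α.app X = F.map (z.app X)) (n : ℕ) (X : C) :
    (F.leftDerived n).map (z.app X) = (α.leftDerived n).app X := by
  let P := projectiveResolution X
  let zP : P.complex ⟶ P.complex :=
    { f := fun i => z.app (P.complex.X i)
      comm' := fun _ _ _ => (z.naturality _).symm }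
  have lift : zP ≫ P.π = P.π ≫ (ChainComplex.single₀ C).map (z.app X) := by
    ext
    rw [HomologicalComplex.comp_f, HomologicalComplex.comp_f, ChainComplex.single₀_map_f_zero]
    exact (z.naturality (P.π.f 0)).symm
  have chainMap_eq : (F.mapHomologicalComplex _).map zP =
      (NatTrans.mapHomologicalComplex α _).app P.complex := by
    ext i
    exact (hα (P.complex.X i)).symm
  rw [F.leftDerived_map_eq n _ zP lift, ProjectiveResolution.leftDerived_app_eq α P,
    Functor.comp_map, chainMap_eq]

variable {R : Type*} [Ring R] [Linear R C] [EnoughProjectives C]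

theorem ext_map_catCenter_app (z : CatCenter C) (n : ℕ) (X A : C) :
    ((Ext R C n).map (z.app X).op).app A = ((Ext R C n).obj (op X)).map (z.app A) := by
  let F := ((linearYoneda R C).obj A).rightOp
  let α : F ⟶ F := NatTrans.rightOp ((linearYoneda R C).map (z.app A))
  have app_eq_map (Y : C) : α.app Y = F.map (z.app Y) := by
    apply Quiver.Hom.unop_inj
    ext f
    exact z.naturality f
  exact congrArg Quiver.Hom.unop (leftDerived_map_catCenter_app F app_eq_map n X)

theorem isZero_ext_of_catCenter_app_eq_zero_of_isIso (z : CatCenter C) {X A : C}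
    (hX : z.app X = 0) [IsIso (z.app A)] (n : ℕ) : IsZero (((Ext R C n).obj (op X)).obj A) := by
  have map_eq_zero : ((Ext R C n).obj (op X)).map (z.app A) = 0 := by
    rw [← ext_map_catCenter_app, hX]
    exact congrArg Quiver.Hom.unop (leftDerived_map_zero ((linearYoneda R C).obj A).rightOp n X X)
  exact IsZero.of_epi_eq_zero _ map_eq_zero

end CatCenter

section CentralElement

universe u v w

variable {k : Type u} {G : Type v} [Semiring k] [Monoid G] {g : G}

/-- The endomorphism of the identity functor of `Rep k G` given by the action of a central element
`g` of `G`. It lets `g - 1` act on `Ext` groups of representations, in either variable. -/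
noncomputable def repCatCenter (hg : ∀ h, Commute g h) : CatCenter (Rep.{w} k G) where
  app A := Rep.ofHom ⟨A.ρ g, fun h => ((hg h).map A.ρ).eq⟩
  naturality _ _ f := by
    ext a
    exact (Rep.hom_comm_apply f g a).symm

theorem repCatCenter_app_trivial (hg : ∀ h, Commute g h) (V : Type w) [AddCommGroup V]
    [Module k V] :
    (repCatCenter hg).app (Rep.trivial k G V) = 𝟙 (Rep.trivial k G V) := rfl

end CentralElement

theorem isZero_groupCohomology_of_commute_of_isUnit_sub_one.{u} {k G : Type u} [CommRing k]
    [Group G] {A : Rep.{u} k G} {g : G} (hg : ∀ h, Commute g h) (hA : IsUnit (A.ρ g - 1)) (p : ℕ) :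
    Limits.IsZero (groupCohomology A p) := by
  let z : CatCenter (Rep.{u} k G) := repCatCenter hg - 1
  have app_trivial : z.app (Rep.trivial k G k) = 0 := by
    simp only [z, CatCenter.app_sub, repCatCenter_app_trivial]
    exact sub_self _
  have : IsIso (z.app A) :=
    (ConcreteCategory.isIso_iff_bijective (z.app A)).2 ((Module.End.isUnit_iff _).1 hA)
  exact (isZero_ext_of_catCenter_app_eq_zero_of_isIso z app_trivial p).of_iso
    (groupCohomologyIsoExt A p)

theorem groupCohomology_zpow_char_isZero_general {G : Type} [Group G] (ρ : G →* ℂˣ) {g : G}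
    (hg : ∀ h, Commute g h) (hρ : ρ g ≠ 1) (p : ℕ) :
    Limits.IsZero (groupCohomology (Rep.of (charRep ρ)) p) := by
  refine isZero_groupCohomology_of_commute_of_isUnit_sub_one hg ?_ p
  have isUnit_sub_one : IsUnit ((ρ g : ℂ) - 1) :=
    (sub_ne_zero.2 (Units.val_eq_one.not.2 hρ)).isUnit
  simpa [charRep] using isUnit_sub_one.map (algebraMap ℂ (Module.End ℂ ℂ))

/-- Let `G = ℤ^r` (`r ≥ 1`) and let `ρ : G → ℂˣ` be a nontrivial character, with `ℂ_ρ`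
the associated one-dimensional representation. Then the group cohomology `H^p(G, ℂ_ρ)`
vanishes for every `p ≥ 0`. -/
theorem groupCohomology_zpow_char_isZero (r : ℕ) (hr : 1 ≤ r)
    (ρ : Multiplicative (Fin r → ℤ) →* ℂˣ) (hρ : ρ ≠ 1) (p : ℕ) :
    Limits.IsZero (groupCohomology (Rep.of (charRep ρ)) p) := by
  obtain ⟨g, hg⟩ := DFunLike.ne_iff.1 hρ
  exact groupCohomology_zpow_char_isZero_general ρ (Commute.all g) hg p
end
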